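/- arXiv:2603.05203 — 2 statements merged into one kernel-verified Lean document; each statement's English description precedes it below -/
import Mathlib

section
/- Let C ⊆ ℤ², O ⊆ C, and D = ⋃_{c ∈ C} cell(c). Let γ : [0, 1] → ℝ² be continuous with γ(0) = p ∈ ℤ² and γ(1) = q ∈ ℤ², such that for every u ∈ [0, 1]: cell(γ(u)) ⊆ D and the interior of cell(γ(u)) is disjoint from cell(r) for every r ∈ O. Then there exists a finite sequence p = p₀, p₁, …, p_m = q with consecutive points at L¹-distance exactly 1 and with pᵢ ∈ C \ O for every 0 ≤ i ≤ m. -/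
/-- The closed axis-aligned unit square with bottom-left corner `x`. -/
def cell (x : ℝ × ℝ) : Set (ℝ × ℝ) := Set.Icc x.1 (x.1 + 1) ×ˢ Set.Icc x.2 (x.2 + 1)

/-- The canonical embedding of an integer grid point into the plane. -/
def toR2 (p : ℤ × ℤ) : ℝ × ℝ := ((p.1 : ℝ), (p.2 : ℝ))

/-!
In the sup metric, the interior of the unit square at `x` meets the unit square at `y` exactly
when `dist x y < 1`. Hence a position `x` is collision-free only if every integer point at distance
less than one from `x` lies in `C \ O`. For each `x` these integer points form a nonempty product
of two sets of at most two consecutive integers, so they are mutually reachable in the grid graph.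
Since a point near `x` still has the floor of `x` at distance less than one, the component of the
grid graph attached to a position is locally constant, hence constant on a connected set of
positions.
-/

lemma interior_cell (x : ℝ × ℝ) :
    interior (cell x) = Set.Ioo x.1 (x.1 + 1) ×ˢ Set.Ioo x.2 (x.2 + 1) := by
  rw [cell, interior_prod_eq, interior_Icc, interior_Icc]

lemma closure_interior_cell (x : ℝ × ℝ) : closure (interior (cell x)) = cell x := by
  rw [interior_cell, closure_prod_eq, closure_Ioo (by simp), closure_Ioo (by simp), cell]

lemma Ioo_inter_Icc_add_nonempty_iff {a b r : ℝ} :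
    (Set.Ioo a (a + r) ∩ Set.Icc b (b + r)).Nonempty ↔ dist a b < r := by
  rw [Real.dist_eq, abs_lt]
  constructor
  · rintro ⟨t, ⟨hat, hta⟩, hbt, htb⟩
    constructor <;> linarith
  · rintro ⟨hba, hab⟩
    refine ⟨(a + b + r) / 2, ⟨?_, ?_⟩, ?_, ?_⟩ <;> linarith

lemma interior_cell_inter_cell_nonempty_iff {x y : ℝ × ℝ} :
    (interior (cell x) ∩ cell y).Nonempty ↔ dist x y < 1 := by
  rw [interior_cell, cell, Set.prod_inter_prod, Set.prod_nonempty_iff,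
    Ioo_inter_Icc_add_nonempty_iff, Ioo_inter_Icc_add_nonempty_iff, Prod.dist_eq,
    max_lt_iff]

lemma dist_toR2_lt_one_iff {p q : ℤ × ℤ} : dist (toR2 p) (toR2 q) < 1 ↔ p = q := by
  simp only [toR2, Prod.dist_eq, max_lt_iff, Int.dist_cast_real, Int.dist_eq', Prod.ext_iff]
  norm_cast
  simp only [Int.abs_lt_one_iff, sub_eq_zero]

lemma dist_toR2_floor_lt_one (x : ℝ × ℝ) : dist x (toR2 (⌊x.1⌋, ⌊x.2⌋)) < 1 := by
  simp only [toR2, Prod.dist_eq, max_lt_iff, Real.dist_eq, Int.self_sub_floor, Int.abs_fract,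
    Int.fract_lt_one, and_self]

lemma mem_of_cell_subset_iUnion {C : Set (ℤ × ℤ)} {x : ℝ × ℝ} {c : ℤ × ℤ}
    (hx : cell x ⊆ ⋃ d ∈ C, cell (toR2 d)) (hc : dist x (toR2 c) < 1) : c ∈ C := by
  have overlap : (interior (cell (toR2 c)) ∩ interior (cell x)).Nonempty := by
    rw [← closure_inter_open_nonempty_iff isOpen_interior, closure_interior_cell, Set.inter_comm]
    exact interior_cell_inter_cell_nonempty_iff.mpr hc
  obtain ⟨z, hzc, hzx⟩ := overlap
  obtain ⟨d, hd, hzd⟩ := Set.mem_iUnion₂.mp (hx (interior_subset hzx))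
  have hcd : c = d :=
    dist_toR2_lt_one_iff.mp (interior_cell_inter_cell_nonempty_iff.mp ⟨z, hzc, hzd⟩)
  rwa [hcd]

lemma abs_sub_le_one_of_dist_lt_one {t : ℝ} {m n : ℤ} (hm : dist t m < 1) (hn : dist t n < 1) :
    |n - m| ≤ 1 := by
  have h : dist (n : ℝ) m < 2 := by linarith [dist_triangle_left (n : ℝ) m t]
  rw [Real.dist_eq] at h
  have h' : |n - m| < 2 := by exact_mod_cast h
  omega

/-- The grid graph on `S`: vertices are the points of `S`, edges join points at `L¹`-distance
one. The vertex set is encoded as a subtype, so that walks cannot leave `S`. -/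
def gridGraph (S : Set (ℤ × ℤ)) : SimpleGraph S where
  Adj a b := |b.1.1 - a.1.1| + |b.1.2 - a.1.2| = 1
  symm := ⟨fun a b h ↦ by rwa [abs_sub_comm a.1.1, abs_sub_comm a.1.2]⟩
  loopless := ⟨fun a h ↦ by simp at h⟩

namespace gridGraph

variable {S : Set (ℤ × ℤ)}

lemma reachable_of_abs_add_abs_le_one {a b : S}
    (h : |b.1.1 - a.1.1| + |b.1.2 - a.1.2| ≤ 1) : (gridGraph S).Reachable a b := by
  rcases h.lt_or_eq with h | h
  · have hab : a = b := Subtype.ext (Prod.ext (by grind) (by grind))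
    rw [hab]
  · exact SimpleGraph.Adj.reachable h

lemma reachable_of_dist_lt_one {x : ℝ × ℝ} (hx : ∀ e, dist x (toR2 e) < 1 → e ∈ S)
    {c d : S} (hc : dist x (toR2 c) < 1) (hd : dist x (toR2 d) < 1) :
    (gridGraph S).Reachable c d := by
  obtain ⟨hc₁, hc₂⟩ := max_lt_iff.mp hc
  obtain ⟨hd₁, hd₂⟩ := max_lt_iff.mp hd
  let corner : S := ⟨(d.1.1, c.1.2), hx _ (max_lt hd₁ hc₂)⟩
  have horizontal : (gridGraph S).Reachable c corner :=
    reachable_of_abs_add_abs_le_one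
      (by simpa [corner] using abs_sub_le_one_of_dist_lt_one hc₁ hd₁)
  have vertical : (gridGraph S).Reachable corner d :=
    reachable_of_abs_add_abs_le_one
      (by simpa [corner] using abs_sub_le_one_of_dist_lt_one hc₂ hd₂)
  exact horizontal.trans vertical

lemma reachable_of_isPreconnected {K : Set (ℝ × ℝ)} (hK : IsPreconnected K)
    (hS : ∀ x ∈ K, ∀ e, dist x (toR2 e) < 1 → e ∈ S) {x y : ℝ × ℝ} (hx : x ∈ K) (hy : y ∈ K)
    {c d : S} (hc : dist x (toR2 c) < 1) (hd : dist y (toR2 d) < 1) :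
    (gridGraph S).Reachable c d := by
  let Linked (x y : ℝ × ℝ) : Prop :=
    ∀ c d : S, dist x (toR2 c) < 1 → dist y (toR2 d) < 1 → (gridGraph S).Reachable c d
  have near_cell (x) (hx : x ∈ K) : ∃ e : S, dist x (toR2 e) < 1 :=
    ⟨⟨_, hS x hx _ (dist_toR2_floor_lt_one x)⟩, dist_toR2_floor_lt_one x⟩
  have linked_nhds (x) (hx : x ∈ K) : ∀ᶠ y in nhdsWithin x K, Linked x y := by
    obtain ⟨e, hxe⟩ := near_cell x hx
    have still_near : ∀ᶠ y in nhdsWithin x K, dist y (toR2 e) < 1 :=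
      nhdsWithin_le_nhds (Metric.isOpen_ball.mem_nhds hxe)
    filter_upwards [still_near, self_mem_nhdsWithin] with y hye hy c d hc hd
    exact (reachable_of_dist_lt_one (hS x hx) hc hxe).trans
      (reachable_of_dist_lt_one (hS y hy) hye hd)
  refine hK.induction₂ Linked linked_nhds ?_ ?_ hx hy c d hc hd
  · intro x y z _ hy _ hxy hyz c d hc hd
    obtain ⟨e, hye⟩ := near_cell y hy
    exact (hxy c e hc hye).trans (hyz e d hye hd)
  · intro x y _ _ hxy c d hc hd
    exact (hxy d c hd hc).symm

end gridGraph

lemma exists_adj_sequence_of_reachable {V : Type*} {G : SimpleGraph V} {a b : V}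
    (h : G.Reachable a b) :
    ∃ (m : ℕ) (w : Fin (m + 1) → V), w 0 = a ∧ w (Fin.last m) = b ∧
      ∀ i : Fin m, G.Adj (w i.castSucc) (w i.succ) := by
  obtain ⟨walk⟩ := h
  exact ⟨walk.length, fun i ↦ walk.getVert i, walk.getVert_zero, walk.getVert_length,
    fun i ↦ walk.adj_getVert_succ i.isLt⟩

theorem motion_avoiding_occupied_gives_grid_walk_general
    (C O : Set (ℤ × ℤ)) (K : Set (ℝ × ℝ)) (hK : IsPreconnected K)
    (p q : ℤ × ℤ) (hp : toR2 p ∈ K) (hq : toR2 q ∈ K)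
    (hin : ∀ x ∈ K, cell x ⊆ ⋃ c ∈ C, cell (toR2 c))
    (havoid : ∀ x ∈ K, ∀ r ∈ O, interior (cell x) ∩ cell (toR2 r) = ∅) :
    ∃ (m : ℕ) (w : Fin (m + 1) → ℤ × ℤ),
      w 0 = p ∧ w (Fin.last m) = q ∧
      (∀ i : Fin (m + 1), w i ∈ C ∧ w i ∉ O) ∧
      (∀ i : Fin m,
        |(w i.succ).1 - (w i.castSucc).1| + |(w i.succ).2 - (w i.castSucc).2| = 1) := by
  have free (x) (hx : x ∈ K) (c : ℤ × ℤ) (hc : dist x (toR2 c) < 1) : c ∈ C \ O :=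
    ⟨mem_of_cell_subset_iUnion (hin x hx) hc, fun hcO ↦
      (interior_cell_inter_cell_nonempty_iff.mpr hc).ne_empty (havoid x hx c hcO)⟩
  have near_self (c : ℤ × ℤ) : dist (toR2 c) (toR2 c) < 1 := dist_toR2_lt_one_iff.mpr rfl
  let start : ↥(C \ O) := ⟨p, free _ hp p (near_self p)⟩
  let goal : ↥(C \ O) := ⟨q, free _ hq q (near_self q)⟩
  have reach : (gridGraph (C \ O)).Reachable start goal :=
    gridGraph.reachable_of_isPreconnected hK free hp hq (near_self p) (near_self q)
  obtain ⟨m, w, hw₀, hwm, hadj⟩ := exists_adj_sequence_of_reachable reach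
  exact ⟨m, fun i ↦ w i, congrArg Subtype.val hw₀, congrArg Subtype.val hwm,
    fun i ↦ (w i).2, hadj⟩

/-- Any continuous collision-free motion of a unit square inside `D = ⋃_{c ∈ C} cell c`
whose interior avoids all occupied cells `cell r`, `r ∈ O`, and which starts and ends at
integer positions `p` and `q`, discretizes to a walk `p = w 0, …, w m = q` in the grid
graph with all vertices in `C \ O`. -/
theorem motion_avoiding_occupied_gives_grid_walk
    (C O : Set (ℤ × ℤ)) (hOC : O ⊆ C)
    (D : Set (ℝ × ℝ)) (hD : D = ⋃ c ∈ C, cell (toR2 c))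
    (p q : ℤ × ℤ) (γ : ℝ → ℝ × ℝ) (hγ : ContinuousOn γ (Set.Icc 0 1))
    (h0 : γ 0 = toR2 p) (h1 : γ 1 = toR2 q)
    (hin : ∀ u ∈ Set.Icc (0 : ℝ) 1, cell (γ u) ⊆ D)
    (havoid : ∀ u ∈ Set.Icc (0 : ℝ) 1, ∀ r ∈ O, interior (cell (γ u)) ∩ cell (toR2 r) = ∅) :
    ∃ (m : ℕ) (w : Fin (m + 1) → ℤ × ℤ),
      w 0 = p ∧ w (Fin.last m) = q ∧
      (∀ i : Fin (m + 1), w i ∈ C ∧ w i ∉ O) ∧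
      (∀ i : Fin m,
        |(w i.succ).1 - (w i.castSucc).1| + |(w i.succ).2 - (w i.castSucc).2| = 1) := by
  subst hD
  exact motion_avoiding_occupied_gives_grid_walk_general C O (γ '' Set.Icc 0 1)
    (isPreconnected_Icc.image γ hγ) p q ⟨0, by simp, h0⟩ ⟨1, by simp, h1⟩
    (Set.forall_mem_image.mpr hin) (Set.forall_mem_image.mpr havoid)
end

section
/- Let G be a finite connected simple graph with vertex set V and let S, T ⊆ V with |S| = |T|. Then there exists f : V → V → ℕ such that f(u, v) > 0 implies u and v are adjacent in G, and for every vertex v ∈ V, excess_f(v) = (1 if v ∈ S else 0) − (1 if v ∈ T else 0). -/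
/-- The total outflow of vertex `v` under the flow `f`. -/
def flowOut {V : Type*} [Fintype V] (f : V → V → ℕ) (v : V) : ℕ := ∑ u, f v u

/-- The total inflow of vertex `v` under the flow `f`. -/
def flowIn {V : Type*} [Fintype V] (f : V → V → ℕ) (v : V) : ℕ := ∑ u, f u v

/-- The excess (outflow minus inflow, in `ℤ`) of vertex `v` under the flow `f`. -/
def excess {V : Type*} [Fintype V] (f : V → V → ℕ) (v : V) : ℤ :=
  (flowOut f v : ℤ) - (flowIn f v : ℤ)

/-!
Since reversing a flow negates its excess, the excesses of flows supported on the edges of `G` form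
a subgroup of `V → ℤ`. It contains `δ_u - δ_v` for every edge `uv`, hence, telescoping along walks,
for every reachable pair. If `G` is connected with a root `r`, every `d : V → ℤ` of total `0` lies
in it, because `d = ∑ v, d v • (δ_v - δ_r)`.
-/

section Excess

variable {V : Type*} [Fintype V]

theorem excess_zero : excess (0 : V → V → ℕ) = 0 := by
  ext v
  simp [excess, flowOut, flowIn]

theorem excess_add (f g : V → V → ℕ) : excess (f + g) = excess f + excess g := by
  ext v
  simp only [excess, flowOut, flowIn, Pi.add_apply, Finset.sum_add_distrib]
  push_cast
  ring

theorem excess_flip (f : V → V → ℕ) : excess (flip f) = -excess f := by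
  ext v
  simp [excess, flowOut, flowIn, flip]

theorem excess_single_single [DecidableEq V] (a b : V) (n : ℕ) :
    excess (Pi.single a (Pi.single b n)) = Pi.single a (n : ℤ) - Pi.single b (n : ℤ) := by
  ext v
  simp [excess, flowOut, flowIn, Pi.single_apply, ite_apply]

end Excess

/-- The flow `f` uses only edges of `G`. Each edge may be used in both directions, with no bound on
its capacity. -/
def IsSupportedOn {V : Type*} (G : SimpleGraph V) (f : V → V → ℕ) : Prop :=
  ∀ u v, 0 < f u v → G.Adj u v

namespace IsSupportedOn

variable {V : Type*} {G : SimpleGraph V} {f g : V → V → ℕ}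

theorem zero : IsSupportedOn G 0 :=
  fun _ _ h => absurd h (lt_irrefl 0)

theorem add (hf : IsSupportedOn G f) (hg : IsSupportedOn G g) : IsSupportedOn G (f + g) :=
  fun u v h => (Nat.add_pos_iff_pos_or_pos.mp h).elim (hf u v) (hg u v)

theorem flip (hf : IsSupportedOn G f) : IsSupportedOn G (flip f) :=
  fun u v h => (hf v u h).symm

theorem single_single [DecidableEq V] {a b : V} (hab : G.Adj a b) (n : ℕ) :
    IsSupportedOn G (Pi.single a (Pi.single b n)) := by
  intro u v h
  obtain rfl : u = a := by
    by_contra hu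
    simp [hu] at h
  obtain rfl : v = b := by
    by_contra hv
    simp [hv] at h
  exact hab

end IsSupportedOn

/-- The group of all functions `V → ℤ` that are the excess of some flow supported on `G`: the
integral `0`-boundaries of `G`. Flows take values in `ℕ`, so negatives come from reversing edges. -/
def excessSubgroup {V : Type*} [Fintype V] (G : SimpleGraph V) : AddSubgroup (V → ℤ) where
  carrier := {d | ∃ f, IsSupportedOn G f ∧ excess f = d}
  zero_mem' := ⟨0, .zero, excess_zero⟩
  add_mem' := by
    rintro _ _ ⟨f, hf, rfl⟩ ⟨g, hg, rfl⟩
    exact ⟨f + g, hf.add hg, excess_add f g⟩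
  neg_mem' := by
    rintro _ ⟨f, hf, rfl⟩
    exact ⟨flip f, hf.flip, excess_flip f⟩

theorem eq_sum_smul_single_sub_single_of_sum_eq_zero {ι R : Type*} [Fintype ι] [DecidableEq ι]
    [Ring R] {d : ι → R} (hd : ∑ i, d i = 0) (r : ι) :
    d = ∑ i, d i • (Pi.single i 1 - Pi.single r 1) := by
  simp only [smul_sub, Finset.sum_sub_distrib, ← Finset.sum_smul, hd, zero_smul, sub_zero]
  exact pi_eq_sum_univ' d

section ExcessSubgroup

variable {V : Type*} [Fintype V] {G : SimpleGraph V}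

theorem single_sub_single_mem_excessSubgroup_of_adj [DecidableEq V] {a b : V} (hab : G.Adj a b) :
    Pi.single a 1 - Pi.single b 1 ∈ excessSubgroup G :=
  ⟨_, .single_single hab 1, excess_single_single a b 1⟩

theorem single_sub_single_mem_excessSubgroup_of_reachable [DecidableEq V] {a b : V}
    (hab : G.Reachable a b) : Pi.single a 1 - Pi.single b 1 ∈ excessSubgroup G := by
  obtain ⟨p⟩ := hab
  induction p with
  | nil => simp only [sub_self, zero_mem]
  | cons h _ ih =>
    rw [← sub_add_sub_cancel]
    exact add_mem (single_sub_single_mem_excessSubgroup_of_adj h) ih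

end ExcessSubgroup

theorem exists_flow_from_sources_to_sinks_general {V : Type*} [Fintype V] {G : SimpleGraph V}
    (hG : G.Preconnected) (d : V → ℤ) (hd : ∑ v, d v = 0) :
    ∃ f : V → V → ℕ, (∀ u v : V, 0 < f u v → G.Adj u v) ∧ ∀ v : V, excess f v = d v := by
  classical
  suffices hmem : d ∈ excessSubgroup G by
    obtain ⟨f, hf, hfd⟩ := hmem
    exact ⟨f, hf, congrFun hfd⟩
  obtain _ | ⟨⟨r⟩⟩ := isEmpty_or_nonempty V
  · rw [Subsingleton.elim d 0]
    exact zero_mem _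
  · rw [eq_sum_smul_single_sub_single_of_sum_eq_zero hd r]
    exact sum_mem fun v _ =>
      zsmul_mem (single_sub_single_mem_excessSubgroup_of_reachable (hG v r)) (d v)

/-- On a finite connected graph `G`, for any vertex sets `S`, `T` of the same size there
is a nonnegative integer flow supported on the edges of `G` whose excess is `+1` at each
vertex of `S`, `−1` at each vertex of `T` (and `0` at vertices in both or neither). -/
theorem exists_flow_from_sources_to_sinks
    {V : Type*} [Fintype V] [DecidableEq V]
    (G : SimpleGraph V) (hG : G.Connected)
    (S T : Finset V) (hST : S.card = T.card) :
    ∃ f : V → V → ℕ,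
      (∀ u v : V, 0 < f u v → G.Adj u v) ∧
      ∀ v : V, excess f v = (if v ∈ S then (1 : ℤ) else 0) - (if v ∈ T then (1 : ℤ) else 0) :=
  exists_flow_from_sources_to_sinks_general hG.preconnected _ (by simp [hST])
end
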